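/- arXiv:2108.00931 — 3 statements merged into one kernel-verified Lean document; each statement's English description precedes it below -/
import Mathlib

section
/- Let S ⊆ {0,1}^(n+1) be a subgroup under bitwise XOR that contains an element of the form (1, u) with u ∈ {0,1}^n, and let S₀ = {x ∈ {0,1}^n : (0, x) ∈ S}. Then S₀ is nonempty and |S⟩ = (1/√2)·(|0⟩⊗|S₀⟩ + |1⟩⊗(X^{u_n} ⊗ ⋯ ⊗ X^{u_1})|S₀⟩), where X^0 = I and X^1 = X, and the j-th factor acts on the qubit corresponding to the j-th bit of u. -/
open Matrix

noncomputable section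

/-- The single-qubit Pauli matrices. -/
def pauliI : Matrix (Fin 2) (Fin 2) ℂ := 1
def pauliX : Matrix (Fin 2) (Fin 2) ℂ := !![0, 1; 1, 0]
def pauliY : Matrix (Fin 2) (Fin 2) ℂ := !![0, -Complex.I; Complex.I, 0]
def pauliZ : Matrix (Fin 2) (Fin 2) ℂ := !![1, 0; 0, -1]

/-- Kronecker product of a `2 × 2` matrix (most significant qubit) with a
`2^m × 2^m` matrix, indexed by `Fin (2^(m+1))`. -/
def kron {m : ℕ} (A : Matrix (Fin 2) (Fin 2) ℂ) (B : Matrix (Fin (2 ^ m)) (Fin (2 ^ m)) ℂ) :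
    Matrix (Fin (2 ^ (m + 1))) (Fin (2 ^ (m + 1))) ℂ := fun i j =>
  A (if (i : ℕ) < 2 ^ m then 0 else 1) (if (j : ℕ) < 2 ^ m then 0 else 1) *
    B ⟨(i : ℕ) % 2 ^ m, Nat.mod_lt _ (pow_pos (by norm_num) m)⟩
      ⟨(j : ℕ) % 2 ^ m, Nat.mod_lt _ (pow_pos (by norm_num) m)⟩

/-- `IsPauliString n M` holds iff `M` is a Kronecker product of `n` single-qubit
Pauli matrices. -/
def IsPauliString : (n : ℕ) → Matrix (Fin (2 ^ n)) (Fin (2 ^ n)) ℂ → Prop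
  | 0, M => M = 1
  | n + 1, M => ∃ Q ∈ ({pauliI, pauliX, pauliY, pauliZ} : Set (Matrix (Fin 2) (Fin 2) ℂ)),
      ∃ B, IsPauliString n B ∧ M = kron Q B

/-- An `n`-qubit Pauli LIM: a nonzero scalar multiple of an `n`-qubit Pauli string. -/
def IsPauliLIM (n : ℕ) (A : Matrix (Fin (2 ^ n)) (Fin (2 ^ n)) ℂ) : Prop :=
  ∃ (c : ℂ) (P : Matrix (Fin (2 ^ n)) (Fin (2 ^ n)) ℂ),
    c ≠ 0 ∧ IsPauliString n P ∧ A = c • P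

/-- The stabilizer set of a vector: all `n`-qubit Pauli LIMs fixing `φ`. -/
def PauliStab {n : ℕ} (φ : Fin (2 ^ n) → ℂ) : Set (Matrix (Fin (2 ^ n)) (Fin (2 ^ n)) ℂ) :=
  {A | IsPauliLIM n A ∧ A.mulVec φ = φ}

/-- Two vectors are Pauli-isomorphic if some Pauli LIM maps one to the other. -/
def PauliIso {n : ℕ} (φ ψ : Fin (2 ^ n) → ℂ) : Prop :=
  ∃ A, IsPauliLIM n A ∧ A.mulVec φ = ψ

/-- Membership in the `n`-qubit Pauli group: `i^k · P` with `P` a Pauli string. -/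
def InPauliGroup (n : ℕ) (A : Matrix (Fin (2 ^ n)) (Fin (2 ^ n)) ℂ) : Prop :=
  ∃ (k : Fin 4) (P : Matrix (Fin (2 ^ n)) (Fin (2 ^ n)) ℂ),
    IsPauliString n P ∧ A = (Complex.I ^ (k : ℕ)) • P

/-- The vector `|0⟩⊗φ₀ + |1⟩⊗φ₁`: first `2^m` coordinates are `φ₀`, last are `φ₁`. -/
def dirac {m : ℕ} (φ₀ φ₁ : Fin (2 ^ m) → ℂ) : Fin (2 ^ (m + 1)) → ℂ := fun i =>
  if h : (i : ℕ) < 2 ^ m then φ₀ ⟨i, h⟩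
  else φ₁ ⟨(i : ℕ) - 2 ^ m, by
    have h1 := i.isLt
    have h2 : (2 : ℕ) ^ (m + 1) = 2 ^ m + 2 ^ m := by rw [pow_succ]; omega
    omega⟩

/-- An `n`-qubit stabilizer state: a unit vector stabilized by exactly `2^n`
elements of the Pauli group. -/
def IsStabilizerState (n : ℕ) (φ : Fin (2 ^ n) → ℂ) : Prop :=
  (∑ i, Complex.normSq (φ i)) = 1 ∧
    Set.ncard {A : Matrix (Fin (2 ^ n)) (Fin (2 ^ n)) ℂ |
      InPauliGroup n A ∧ A.mulVec φ = φ} = 2 ^ n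

/-- The standard Hermitian inner product on `ℂ^N`. -/
def hinner {N : ℕ} (φ ψ : Fin N → ℂ) : ℂ :=
  ∑ i, (starRingEnd ℂ) (φ i) * ψ i



/-- `Z^{a_m} ⊗ ⋯ ⊗ Z^{a_1}` (the `j`-th tensor factor is `Z` iff `a j = true`). -/
def zString : (m : ℕ) → (Fin m → Bool) → Matrix (Fin (2 ^ m)) (Fin (2 ^ m)) ℂ
  | 0, _ => 1
  | m + 1, a => kron (if a (Fin.last m) then pauliZ else 1) (zString m (fun j => a j.castSucc))

open Classical in
/-- Number of edges of `G` with both endpoints in the set of vertices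
`j` with `x.testBit j = true`. -/
def edgeCount {n : ℕ} (G : SimpleGraph (Fin n)) (x : ℕ) : ℕ :=
  (Finset.univ.filter (fun p : Fin n × Fin n =>
    p.1 < p.2 ∧ G.Adj p.1 p.2 ∧ x.testBit p.1.val = true ∧ x.testBit p.2.val = true)).card

/-- The graph state of a simple graph on vertices `{0, …, n-1}`; vertex `j`
corresponds to the `j`-th bit of the basis-state index. -/
def graphState {n : ℕ} (G : SimpleGraph (Fin n)) : Fin (2 ^ n) → ℂ :=
  fun x => (-1 : ℂ) ^ edgeCount G (x : ℕ) / Real.sqrt (2 ^ n)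

/-- The subfunction of `f` of order `ℓ` obtained by fixing the first `ℓ`
arguments to `a`. -/
def subfun {N : ℕ} (f : (Fin N → Bool) → ℂ) (ℓ : ℕ) (a : Fin ℓ → Bool) :
    (Fin (N - ℓ) → Bool) → ℂ := fun x =>
  f (fun i => if h : (i : ℕ) < ℓ then a ⟨i, h⟩
      else x ⟨(i : ℕ) - ℓ, by have := i.isLt; omega⟩)

/-- A strong matching: a set of pairwise vertex-disjoint edges of `G` such that
every edge of `G` with both endpoints among the matched vertices is in `M`. -/
def IsStrongMatching {V : Type*} (G : SimpleGraph V) (M : Set (Sym2 V)) : Prop :=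
  M ⊆ G.edgeSet ∧
  (∀ e₁ ∈ M, ∀ e₂ ∈ M, e₁ ≠ e₂ → ∀ v, v ∈ e₁ → v ∉ e₂) ∧
  (∀ e ∈ G.edgeSet, (∀ v ∈ e, ∃ e' ∈ M, v ∈ e') → e ∈ M)

/-- An `(S,T)`-strong matching: a strong matching each of whose edges has one
endpoint in `S` and the other in `T`. -/
def IsSTStrongMatching {V : Type*} (G : SimpleGraph V) (S T : Set V) (M : Set (Sym2 V)) : Prop :=
  IsStrongMatching G M ∧ ∀ e ∈ M, ∃ u ∈ S, ∃ w ∈ T, e = s(u, w)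

/-- The `n × n` grid graph. -/
def gridGraph (n : ℕ) : SimpleGraph (Fin n × Fin n) :=
  SimpleGraph.fromRel (fun u v =>
    (u.1 = v.1 ∧ (u.2 : ℕ) + 1 = (v.2 : ℕ)) ∨ (u.2 = v.2 ∧ (u.1 : ℕ) + 1 = (v.1 : ℕ)))

/-- The amplitude function of the graph state of `G`, on assignments `V → Bool`. -/
def ampGraphState {V : Type*} [Fintype V] (G : SimpleGraph V) (x : V → Bool) : ℂ :=
  (-1 : ℂ) ^ Set.ncard {e ∈ G.edgeSet | ∀ v ∈ e, x v = true} / Real.sqrt (2 ^ Fintype.card V)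

open Classical in
/-- The coset state of `C ⊆ {0,…,2^n − 1}`: the uniform superposition over `C`. -/
def cosetState (n : ℕ) (C : Set ℕ) : Fin (2 ^ n) → ℂ :=
  fun x => if (x : ℕ) ∈ C then 1 / Real.sqrt (C.ncard) else 0


/-- `X^{a_m} ⊗ ⋯ ⊗ X^{a_1}` (the `j`-th tensor factor is `X` iff `a j = true`). -/
def xString : (m : ℕ) → (Fin m → Bool) → Matrix (Fin (2 ^ m)) (Fin (2 ^ m)) ℂ
  | 0, _ => 1
  | m + 1, a => kron (if a (Fin.last m) then pauliX else 1) (xString m (fun j => a j.castSucc))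

theorem aux_lt_iff (m i : ℕ) (hi : i < 2 ^ (m + 1)) : i < 2 ^ m ↔ i.testBit m = false := by
  constructor
  · exact fun h => Nat.testBit_lt_two_pow h
  · intro h
    apply Nat.lt_pow_two_of_testBit
    intro k hk
    rcases Nat.eq_or_lt_of_le hk with h1 | h1
    · rw [← h1]; exact h
    · exact Nat.testBit_lt_two_pow (lt_of_lt_of_le hi (Nat.pow_le_pow_right (by norm_num) h1))

theorem aux_two_pow_add (m y : ℕ) (hy : y < 2 ^ m) : 2 ^ m + y = 2 ^ m ^^^ y := by
  apply Nat.eq_of_testBit_eq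
  intro k
  rw [Nat.testBit_xor, show 2 ^ m + y = 2 ^ m ||| y by
    simpa using Nat.two_pow_add_eq_or_of_lt hy 1, Nat.testBit_or, Nat.testBit_two_pow]
  by_cases h : m = k
  · subst h; simp [Nat.testBit_lt_two_pow hy]
  · simp [h]

open Classical in
theorem aux_xString (U : ℕ) : ∀ (m : ℕ) (i j : Fin (2 ^ m)),
    xString m (fun k => U.testBit (k : ℕ)) i j =
      if ∀ k < m, (j : ℕ).testBit k = ((i : ℕ).testBit k ^^ U.testBit k) then 1 else 0 := by
  intro m
  induction m with
  | zero =>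
    intro i j
    have : i = j := Subsingleton.elim (α := Fin 1) i j
    subst this
    simp only [xString]
    rw [Matrix.one_apply_eq]
    simp
  | succ m ih =>
    intro i j
    have hm := ih ⟨(i : ℕ) % 2 ^ m, Nat.mod_lt _ (pow_pos (by norm_num) m)⟩
      ⟨(j : ℕ) % 2 ^ m, Nat.mod_lt _ (pow_pos (by norm_num) m)⟩
    have e1 : (∀ k < m, ((j : ℕ) % 2 ^ m).testBit k =
        (((i : ℕ) % 2 ^ m).testBit k ^^ U.testBit k)) ↔
        ∀ k < m, (j : ℕ).testBit k = ((i : ℕ).testBit k ^^ U.testBit k) := by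
      refine forall_congr' fun k => forall_congr' fun hk => ?_
      simp [Nat.testBit_mod_two_pow, hk]
    have e2 : (∀ k < m + 1, (j : ℕ).testBit k = ((i : ℕ).testBit k ^^ U.testBit k)) ↔
        ((j : ℕ).testBit m = ((i : ℕ).testBit m ^^ U.testBit m)) ∧
        ∀ k < m, (j : ℕ).testBit k = ((i : ℕ).testBit k ^^ U.testBit k) := by
      constructor
      · exact fun h => ⟨h m (by omega), fun k hk => h k (by omega)⟩
      · rintro ⟨h1, h2⟩ k hk
        rcases Nat.lt_succ_iff_lt_or_eq.1 hk with h | h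
        · exact h2 k h
        · subst h; exact h1
    simp only [e1] at hm
    simp only [xString, kron, Fin.val_castSucc, Fin.val_last, hm, e2,
      aux_lt_iff m i i.2, aux_lt_iff m j j.2]
    cases hi : (i : ℕ).testBit m <;> cases hj : (j : ℕ).testBit m <;>
      rcases Bool.eq_false_or_eq_true (U.testBit m) with hu | hu <;> simp [pauliX, hu]

theorem aux_mulVec (n U : ℕ) (hU : U < 2 ^ n) (φ : Fin (2 ^ n) → ℂ) (i : Fin (2 ^ n)) :
    (xString n (fun k => U.testBit (k : ℕ))).mulVec φ i =
      φ ⟨(i : ℕ) ^^^ U, Nat.xor_lt_two_pow i.2 hU⟩ := by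
  classical
  have key : ∀ j : Fin (2 ^ n),
      (∀ k < n, (j : ℕ).testBit k = ((i : ℕ).testBit k ^^ U.testBit k)) ↔
      j = ⟨(i : ℕ) ^^^ U, Nat.xor_lt_two_pow i.2 hU⟩ := by
    intro j
    rw [Fin.ext_iff]
    constructor
    · intro h
      apply Nat.eq_of_testBit_eq
      intro k
      by_cases hk : k < n
      · rw [h k hk, Nat.testBit_xor]
      · have hp : 2 ^ n ≤ 2 ^ k := Nat.pow_le_pow_right (by norm_num) (by omega)
        rw [Nat.testBit_lt_two_pow (lt_of_lt_of_le j.2 hp),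
          Nat.testBit_lt_two_pow (lt_of_lt_of_le (Nat.xor_lt_two_pow i.2 hU) hp)]
    · intro h k _
      rw [h]; simp
  simp only [Matrix.mulVec, dotProduct, aux_xString, key]
  simp

theorem aux_card (n : ℕ) (S : Set ℕ)
    (hbound : ∀ x ∈ S, x < 2 ^ (n + 1))
    (hclosed : ∀ a ∈ S, ∀ b ∈ S, a ^^^ b ∈ S)
    (U : ℕ) (hU : U < 2 ^ n) (hUS : 2 ^ n + U ∈ S) :
    S.ncard = 2 * {x : ℕ | x < 2 ^ n ∧ x ∈ S}.ncard := by
  set T : Set ℕ := {x : ℕ | x < 2 ^ n ∧ x ∈ S} with hT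
  have hb : (2 ^ n + U).testBit n = true := by
    rw [aux_two_pow_add n U hU]; simp [Nat.testBit_lt_two_pow hU]
  have hfin : T.Finite := (Set.finite_lt_nat (2 ^ n)).subset fun x hx => hx.1
  have hinj : Function.Injective (fun x : ℕ => x ^^^ (2 ^ n + U)) := by
    intro a b h
    exact Nat.xor_left_inj.1 h
  have hS : S = T ∪ (fun x : ℕ => x ^^^ (2 ^ n + U)) '' T := by
    ext x
    constructor
    · intro hx
      by_cases h : x < 2 ^ n
      · exact Or.inl ⟨h, hx⟩
      · right
        have h2 := hclosed x hx _ hUS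
        refine ⟨x ^^^ (2 ^ n + U), ⟨?_, h2⟩, by simp [Nat.xor_assoc]⟩
        rw [aux_lt_iff n _ (hbound _ h2), Nat.testBit_xor, hb]
        rw [aux_lt_iff n _ (hbound _ hx)] at h
        simpa using h
    · rintro (h | ⟨y, hy, rfl⟩)
      · exact h.2
      · exact hclosed _ hy.2 _ hUS
  have hd : Disjoint T ((fun x : ℕ => x ^^^ (2 ^ n + U)) '' T) := by
    rw [Set.disjoint_left]
    rintro _ h1 ⟨y, hy, rfl⟩
    have h3 := Nat.testBit_lt_two_pow h1.1
    simp only [Nat.testBit_xor, hb, Nat.testBit_lt_two_pow hy.1] at h3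
    simp at h3
  rw [hS, Set.ncard_union_eq hd hfin (hfin.image _), Set.ncard_image_of_injective _ hinj]
  ring

/-- Recursive decomposition of a coset state of a subgroup `S ⊆ {0,1}^(n+1)` (under
bitwise XOR, with bitstrings encoded as natural numbers `< 2^(n+1)`, the first/new
bit being the most significant one) containing an element `(1, u)`, where `u` is
encoded by `U < 2^n`. -/
theorem coset_state_recursive_decomposition (n : ℕ) (S : Set ℕ)
    (hbound : ∀ x ∈ S, x < 2 ^ (n + 1)) (hzero : 0 ∈ S)
    (hclosed : ∀ a ∈ S, ∀ b ∈ S, a ^^^ b ∈ S)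
    (U : ℕ) (hU : U < 2 ^ n) (hUS : 2 ^ n + U ∈ S) :
    {x : ℕ | x < 2 ^ n ∧ x ∈ S}.Nonempty ∧
      cosetState (n + 1) S =
        (Real.sqrt 2 : ℂ)⁻¹ •
          dirac (cosetState n {x : ℕ | x < 2 ^ n ∧ x ∈ S})
            ((xString n (fun j => U.testBit (j : ℕ))).mulVec
              (cosetState n {x : ℕ | x < 2 ^ n ∧ x ∈ S})) := by
  refine ⟨⟨0, by positivity, hzero⟩, ?_⟩
  have hc := aux_card n S hbound hclosed U hU hUS
  funext i
  rw [Pi.smul_apply, smul_eq_mul]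
  have hsq : (1 / (Real.sqrt (S.ncard : ℝ)) : ℂ) = (Real.sqrt 2 : ℂ)⁻¹ *
      (1 / (Real.sqrt (({x : ℕ | x < 2 ^ n ∧ x ∈ S}.ncard : ℕ) : ℝ))) := by
    rw [hc, Nat.cast_mul, Real.sqrt_mul (by positivity)]
    push_cast
    rw [one_div, one_div, mul_inv]
  by_cases h : (i : ℕ) < 2 ^ n
  · simp only [dirac, h, dif_pos]
    by_cases hS : (i : ℕ) ∈ S
    · have hT : (i : ℕ) ∈ {x : ℕ | x < 2 ^ n ∧ x ∈ S} := ⟨h, hS⟩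
      simp only [cosetState, if_pos hS, if_pos hT]
      exact hsq
    · have hT : (i : ℕ) ∉ {x : ℕ | x < 2 ^ n ∧ x ∈ S} := fun h => hS h.2
      simp only [cosetState, if_neg hS, if_neg hT, mul_zero]
  · have hy : (i : ℕ) - 2 ^ n < 2 ^ n := by
      have := i.2
      have h2 : 2 ^ (n + 1) = 2 ^ n * 2 := pow_succ 2 n
      omega
    simp only [dirac, h, dif_neg, not_false_eq_true, aux_mulVec n U hU]
    obtain ⟨y, hyi⟩ : ∃ y, y = (i : ℕ) - 2 ^ n := ⟨_, rfl⟩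
    have hi : (i : ℕ) = 2 ^ n + y := by omega
    have hmem : (i : ℕ) ∈ S ↔ y ^^^ U ∈ S := by
      rw [← hyi] at hy
      have e : (2 ^ n + y) ^^^ (2 ^ n + U) = y ^^^ U := by
        rw [aux_two_pow_add n y hy, aux_two_pow_add n U hU, Nat.xor_comm (2 ^ n) y,
          Nat.xor_assoc, ← Nat.xor_assoc (2 ^ n) (2 ^ n) U, Nat.xor_self, Nat.zero_xor]
      rw [hi]
      constructor
      · intro h1
        rw [← e]; exact hclosed _ h1 _ hUS
      · intro h1
        have := hclosed _ h1 _ hUS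
        rw [← e, Nat.xor_assoc, Nat.xor_self, Nat.xor_zero] at this
        exact this
    have hlt : y ^^^ U < 2 ^ n := Nat.xor_lt_two_pow (hyi ▸ hy) hU
    rw [hyi] at hlt hmem
    by_cases hS : (i : ℕ) ∈ S
    · have hT : ((i : ℕ) - 2 ^ n) ^^^ U ∈ {x : ℕ | x < 2 ^ n ∧ x ∈ S} := ⟨hlt, hmem.1 hS⟩
      simp only [cosetState, if_pos hS, if_pos hT]
      exact hsq
    · have hT : ((i : ℕ) - 2 ^ n) ^^^ U ∉ {x : ℕ | x < 2 ^ n ∧ x ∈ S} :=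
        fun h => hS (hmem.2 h.2)
      simp only [cosetState, if_neg hS, if_neg hT, mul_zero]
end
end

section
/- Define sets Z_k ⊆ ℂ^(2^k) recursively by Z_1 = {(|0⟩ + |1⟩)/√2} and Z_{k+1} = {(1/√2)·(|0⟩⊗v + |1⟩⊗(Z^{a_k} ⊗ ⋯ ⊗ Z^{a_1})v) : v ∈ Z_k, (a_1,…,a_k) ∈ {0,1}^k}, where Z^0 = I and Z^1 = Z. Then for every n ≥ 1, Z_n equals the set of n-vertex graph states {|G⟩ : G a simple graph on vertex set {1,…,n}}. -/
open Matrix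

noncomputable section

/-- The states represented by Tower `⟨Z⟩`-LIMDDs: `Z_1 = {(|0⟩+|1⟩)/√2}` and
`Z_{k+1}` is built from `Z_k` by the tower construction with `Z`-string labels. -/
def Zset : (k : ℕ) → Set (Fin (2 ^ k) → ℂ)
  | 0 => ∅
  | 1 => {fun _ => (Real.sqrt 2 : ℂ)⁻¹}
  | k + 2 => {w | ∃ v ∈ Zset (k + 1), ∃ a : Fin (k + 1) → Bool,
      w = (Real.sqrt 2 : ℂ)⁻¹ • dirac v ((zString (k + 1) a).mulVec v)}

lemma two_pow_bit {m x : ℕ} (h1 : ¬ x < 2 ^ m) (h2 : x < 2 ^ (m + 1)) :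
    x.testBit m = true ∧ x % 2 ^ m = x - 2 ^ m := by
  have h3 : (2 : ℕ) ^ (m + 1) = 2 ^ m + 2 ^ m := by rw [pow_succ]; omega
  have h4 : x % 2 ^ m = x - 2 ^ m := by
    rw [Nat.mod_eq_sub_mod (by omega), Nat.mod_eq_of_lt (by omega)]
  refine ⟨?_, h4⟩
  rw [Nat.testBit_eq_decide_div_mod_eq]
  have : x / 2 ^ m = 1 := by
    apply Nat.div_eq_of_lt_le <;> omega
  simp [this]

/-- number of common ones -/
def zCnt (m : ℕ) (a : Fin m → Bool) (x : ℕ) : ℕ :=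
  ∑ j : Fin m, if a j = true ∧ x.testBit j.val = true then 1 else 0

lemma zCnt_mod (m : ℕ) (a : Fin m → Bool) (x : ℕ) : zCnt m a (x % 2 ^ m) = zCnt m a x := by
  unfold zCnt
  refine Finset.sum_congr rfl fun j _ => ?_
  simp [Nat.testBit_mod_two_pow]

lemma zString_eq (m : ℕ) (a : Fin m → Bool) :
    zString m a = Matrix.diagonal (fun i : Fin (2 ^ m) => (-1 : ℂ) ^ zCnt m a (i : ℕ)) := by
  induction m with
  | zero =>
    simp [zString, zCnt]
  | succ m ih =>
    ext i j
    have hi := i.isLt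
    have hj := j.isLt
    have hc : zCnt (m + 1) a (i : ℕ) = zCnt m (fun j => a j.castSucc) (i : ℕ) +
        if a (Fin.last m) = true ∧ (i : ℕ).testBit m = true then 1 else 0 := by
      simp only [zCnt, Fin.sum_univ_castSucc, Fin.val_castSucc, Fin.val_last]
    rw [zString, ih, kron, Matrix.diagonal_apply, Matrix.diagonal_apply, hc]
    simp only [Fin.mk.injEq, zCnt_mod, Fin.ext_iff]
    by_cases h1 : (i : ℕ) < 2 ^ m <;> by_cases h2 : (j : ℕ) < 2 ^ m
    · have := Nat.testBit_lt_two_pow h1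
      simp only [h1, h2, Nat.mod_eq_of_lt, this]
      by_cases h : a (Fin.last m) <;> simp [h, pauliZ]
    · have : (i : ℕ) ≠ j := by omega
      simp only [h1, h2, this]
      by_cases h : a (Fin.last m) <;> simp [h, pauliZ]
    · have : (i : ℕ) ≠ j := by omega
      simp only [h1, h2, this]
      by_cases h : a (Fin.last m) <;> simp [h, pauliZ]
    · obtain ⟨hb, he⟩ := two_pow_bit h1 hi
      obtain ⟨hb', he'⟩ := two_pow_bit h2 hj
      have : ((i : ℕ) - 2 ^ m = (j : ℕ) - 2 ^ m) ↔ (i : ℕ) = j := by omega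
      simp only [h1, h2, he, he', hb, this]
      by_cases h : a (Fin.last m) <;> simp [h, pauliZ, pow_succ]

lemma edgeCount_mod {n : ℕ} (G : SimpleGraph (Fin n)) (x : ℕ) :
    edgeCount G (x % 2 ^ n) = edgeCount G x := by
  classical
  unfold edgeCount
  congr 1
  refine Finset.filter_congr fun p _ => ?_
  simp [Nat.testBit_mod_two_pow]

lemma edgeCount_succ {m : ℕ} (G : SimpleGraph (Fin (m + 1))) (G' : SimpleGraph (Fin m))
    (a : Fin m → Bool) (h1 : ∀ i j, G.Adj (Fin.castSucc i) (Fin.castSucc j) ↔ G'.Adj i j)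
    (h2 : ∀ j, G.Adj (Fin.castSucc j) (Fin.last m) ↔ a j = true) (x : ℕ) :
    edgeCount G x = edgeCount G' x + if x.testBit m = true then zCnt m a x else 0 := by
  classical
  have hl : ∀ i : Fin (m + 1), ¬ Fin.last m < i := fun i => not_lt.2 (Fin.le_last i)
  simp only [edgeCount, Finset.card_filter, Fintype.sum_prod_type, Fin.sum_univ_castSucc, h1, h2,
    Fin.castSucc_lt_castSucc_iff, Fin.val_castSucc, Fin.castSucc_lt_last, Fin.val_last, zCnt,
    Finset.sum_add_distrib, hl, true_and, false_and, if_false, Finset.sum_const_zero, add_zero]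
  congr 1
  by_cases h : x.testBit m = true <;> simp [h]

lemma graphState_succ {m : ℕ} (G : SimpleGraph (Fin (m + 1))) (G' : SimpleGraph (Fin m))
    (a : Fin m → Bool) (h1 : ∀ i j, G.Adj (Fin.castSucc i) (Fin.castSucc j) ↔ G'.Adj i j)
    (h2 : ∀ j, G.Adj (Fin.castSucc j) (Fin.last m) ↔ a j = true) :
    graphState G = (Real.sqrt 2 : ℂ)⁻¹ • dirac (graphState G')
      ((zString m a).mulVec (graphState G')) := by
  funext i
  have hs : ((Real.sqrt (2 ^ (m + 1)) : ℝ) : ℂ) = (Real.sqrt (2 ^ m) : ℝ) * (Real.sqrt 2 : ℝ) := by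
    rw [pow_succ, Real.sqrt_mul (by positivity)]; push_cast; rfl
  rw [zString_eq]
  simp only [Pi.smul_apply, smul_eq_mul, dirac, Matrix.mulVec_diagonal, graphState, hs,
    edgeCount_succ G G' a h1 h2]
  by_cases h : (i : ℕ) < 2 ^ m
  · have := Nat.testBit_lt_two_pow h
    simp only [h, this, dif_pos]
    simp [div_eq_mul_inv]
    ring
  · obtain ⟨hb, he⟩ := two_pow_bit h i.isLt
    simp only [h, hb, ← he, edgeCount_mod, zCnt_mod, dif_neg, not_false_eq_true, if_true, pow_add,
      div_eq_mul_inv, mul_inv]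
    ring

lemma exists_ext {m : ℕ} (G' : SimpleGraph (Fin m)) (a : Fin m → Bool) :
    ∃ G : SimpleGraph (Fin (m + 1)),
      (∀ i j, G.Adj (Fin.castSucc i) (Fin.castSucc j) ↔ G'.Adj i j) ∧
      (∀ j, G.Adj (Fin.castSucc j) (Fin.last m) ↔ a j = true) := by
  refine ⟨SimpleGraph.fromRel (fun u v =>
    (∃ i j, u = Fin.castSucc i ∧ v = Fin.castSucc j ∧ G'.Adj i j) ∨
    (∃ j, u = Fin.castSucc j ∧ v = Fin.last m ∧ a j = true)), fun i j => ?_, fun j => ?_⟩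
  · have hn : ∀ k : Fin m, Fin.castSucc k ≠ Fin.last m := fun k => (Fin.castSucc_lt_last k).ne
    simp only [SimpleGraph.fromRel_adj, hn, Fin.castSucc_inj, ne_eq]
    constructor
    · rintro ⟨_, (⟨i', j', rfl, rfl, h⟩ | ⟨_, _, h, _⟩) | (⟨i', j', rfl, rfl, h⟩ | ⟨_, _, h, _⟩)⟩
      · exact h
      · exact h.elim
      · exact h.symm
      · exact h.elim
    · intro h
      exact ⟨h.ne, Or.inl (Or.inl ⟨i, j, rfl, rfl, h⟩)⟩
  · have hn : ∀ k : Fin m, Fin.castSucc k ≠ Fin.last m := fun k => (Fin.castSucc_lt_last k).ne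
    have hn' : ∀ k : Fin m, Fin.last m ≠ Fin.castSucc k := fun k => (hn k).symm
    simp [SimpleGraph.fromRel_adj, hn, hn', Fin.castSucc_inj]

lemma Zset_aux (k : ℕ) :
    Zset (k + 1) = {ψ : Fin (2 ^ (k + 1)) → ℂ | ∃ G : SimpleGraph (Fin (k + 1)),
      ψ = graphState G} := by
  classical
  induction k with
  | zero =>
    have hg : ∀ G : SimpleGraph (Fin 1), graphState G = fun _ => (Real.sqrt 2 : ℂ)⁻¹ := by
      intro G
      funext x
      have : edgeCount G (x : ℕ) = 0 := by
        simp only [edgeCount, Finset.card_eq_zero, Finset.filter_eq_empty_iff]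
        rintro ⟨p, q⟩ _ ⟨h, _⟩
        exact absurd h (by simp [Subsingleton.elim p q])
      simp [graphState, this]
    ext w
    simp only [Zset, Set.mem_ofPred_eq, hg]
    exact ⟨fun h => ⟨⊥, h⟩, fun ⟨_, h⟩ => h⟩
  | succ k ih =>
    ext w
    rw [Zset, ih]
    constructor
    · rintro ⟨v, ⟨G', rfl⟩, a, rfl⟩
      obtain ⟨G, h1, h2⟩ := exists_ext G' a
      exact ⟨G, (graphState_succ G G' a h1 h2).symm⟩
    · rintro ⟨G, rfl⟩
      exact ⟨_, ⟨G.comap Fin.castSucc, rfl⟩, fun j => decide (G.Adj j.castSucc (Fin.last _)),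
        graphState_succ G _ _ (fun i j => by simp) (fun j => by simp)⟩

/-- The tower construction with `Z`-string labels produces exactly the graph states. -/
theorem Zset_eq_graph_states (n : ℕ) (hn : 1 ≤ n) :
    Zset n = {ψ : Fin (2 ^ n) → ℂ | ∃ G : SimpleGraph (Fin n), ψ = graphState G} := by
  obtain ⟨k, rfl⟩ : ∃ k, n = k + 1 := ⟨n - 1, by omega⟩
  exact Zset_aux k

end
end

section
/- Define sets X_k ⊆ ℂ^(2^k) recursively by X_1 = {|0⟩, (|0⟩ + |1⟩)/√2} and X_{k+1} = {|0⟩⊗v : v ∈ X_k} ∪ {(1/√2)·(|0⟩⊗v + |1⟩⊗(X^{a_k} ⊗ ⋯ ⊗ X^{a_1})v) : v ∈ X_k, (a_1,…,a_k) ∈ {0,1}^k}, where X^0 = I and X^1 = X. Then for every n ≥ 1, X_n equals the set {|V⟩ : V a subgroup of ({0,1}^n, bitwise XOR)}. -/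
open Matrix

noncomputable section

/-- The states represented by Tower `⟨X⟩`-LIMDDs: `X_1 = {|0⟩, (|0⟩+|1⟩)/√2}` and
`X_{k+1}` is built from `X_k` by the tower construction with `X`-string labels. -/
def Xset : (k : ℕ) → Set (Fin (2 ^ k) → ℂ)
  | 0 => ∅
  | 1 => {(fun i => if (i : ℕ) = 0 then 1 else 0 : Fin (2 ^ 1) → ℂ),
      fun _ => (Real.sqrt 2 : ℂ)⁻¹}
  | k + 2 => {w | ∃ v ∈ Xset (k + 1), w = dirac v 0} ∪
      {w | ∃ v ∈ Xset (k + 1), ∃ a : Fin (k + 1) → Bool,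
        w = (Real.sqrt 2 : ℂ)⁻¹ • dirac v ((xString (k + 1) a).mulVec v)}

theorem hx_add_eq {m x : ℕ} (h : x < 2 ^ m) : 2 ^ m + x = 2 ^ m ^^^ x := by
  have hp : 0 < 2 ^ m := by positivity
  have h1 : (2 ^ m ^^^ x) / 2 ^ m = 1 := by
    rw [Nat.xor_div_two_pow, Nat.div_self hp, Nat.div_eq_of_lt h]; rfl
  have h2 : (2 ^ m ^^^ x) % 2 ^ m = x := by
    rw [Nat.xor_mod_two_pow, Nat.mod_self, Nat.mod_eq_of_lt h]; simp
  have h3 := Nat.div_add_mod (2 ^ m ^^^ x) (2 ^ m)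
  rw [h1, h2] at h3
  omega

theorem hx_lh {m x t : ℕ} (h : x < 2 ^ m) (ht : t < 2 ^ m) :
    x ^^^ (2 ^ m + t) = 2 ^ m + (x ^^^ t) := by
  rw [hx_add_eq ht, hx_add_eq (Nat.xor_lt_two_pow h ht), Nat.xor_left_comm]

theorem hx_hl {m x t : ℕ} (h : x < 2 ^ m) (ht : t < 2 ^ m) :
    (2 ^ m + x) ^^^ t = 2 ^ m + (x ^^^ t) := by
  rw [hx_add_eq h, hx_add_eq (Nat.xor_lt_two_pow h ht), Nat.xor_assoc]

theorem hx_hh {m x t : ℕ} (h : x < 2 ^ m) (ht : t < 2 ^ m) :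
    (2 ^ m + x) ^^^ (2 ^ m + t) = x ^^^ t := by
  rw [hx_add_eq h, hx_add_eq ht, Nat.xor_assoc, Nat.xor_left_comm x, ← Nat.xor_assoc,
    Nat.xor_self, Nat.zero_xor]

theorem hx_split {m x : ℕ} (h : x < 2 ^ (m + 1)) :
    x < 2 ^ m ∨ ∃ y, y < 2 ^ m ∧ x = 2 ^ m + y := by
  rw [pow_succ] at h
  by_cases h1 : x < 2 ^ m
  · exact Or.inl h1
  · exact Or.inr ⟨x - 2 ^ m, by omega, by omega⟩

def svalX : (m : ℕ) → (Fin m → Bool) → ℕ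
  | 0, _ => 0
  | m + 1, a => (if a (Fin.last m) then 2 ^ m else 0) + svalX m (fun j => a j.castSucc)

theorem svalX_lt : ∀ (m : ℕ) (a : Fin m → Bool), svalX m a < 2 ^ m
  | 0, _ => by simp [svalX]
  | m + 1, a => by
    have := svalX_lt m (fun j => a j.castSucc)
    rw [svalX, pow_succ]
    split_ifs <;> omega

theorem svalX_surj : ∀ (m s : ℕ), s < 2 ^ m → ∃ a, svalX m a = s
  | 0, s, h => ⟨fun _ => false, by simp at h; simp [svalX, h]⟩
  | m + 1, s, h => by
    rcases hx_split h with h | ⟨y, hy, rfl⟩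
    · obtain ⟨a, ha⟩ := svalX_surj m s h
      exact ⟨Fin.snoc (α := fun _ => Bool) a false, by simp [svalX, ha]⟩
    · obtain ⟨a, ha⟩ := svalX_surj m y hy
      exact ⟨Fin.snoc (α := fun _ => Bool) a true, by simp [svalX, ha]⟩

theorem xString_apply : ∀ (m : ℕ) (a : Fin m → Bool) (i j : Fin (2 ^ m)),
    xString m a i j = if (j : ℕ) = (i : ℕ) ^^^ svalX m a then 1 else 0
  | 0, a, i, j => by
    have hi : (i : ℕ) = 0 := by have := i.isLt; simp at this ⊢
    have hj : (j : ℕ) = 0 := by have := j.isLt; simp at this ⊢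
    have : i = j := Fin.ext (by omega)
    subst this
    simp [xString, svalX, hi]
  | m + 1, a, ⟨i, hi⟩, ⟨j, hj⟩ => by
    have ih := xString_apply m (fun j => a j.castSucc)
    have hs := svalX_lt m (fun j => a j.castSucc)
    rw [xString, svalX, kron, Matrix.one_fin_two]
    simp only [ih]
    generalize svalX m (fun j => a j.castSucc) = s at *
    rcases hx_split hi with h | ⟨i', h, rfl⟩ <;> rcases hx_split hj with h' | ⟨j', h', rfl⟩ <;>
      by_cases ha : a (Fin.last m) = true <;>
      have hlt := Nat.xor_lt_two_pow h hs <;>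
      simp [ha, h, h', pauliX, Nat.mod_eq_of_lt, hx_lh, hx_hl, hx_hh, hs] <;> omega

theorem xString_mulVec (m : ℕ) (a : Fin m → Bool) (v : Fin (2 ^ m) → ℂ) (i : Fin (2 ^ m)) :
    (xString m a).mulVec v i =
      v ⟨(i : ℕ) ^^^ svalX m a, Nat.xor_lt_two_pow i.isLt (svalX_lt m a)⟩ := by
  rw [Matrix.mulVec, dotProduct, Finset.sum_eq_single
    (⟨(i : ℕ) ^^^ svalX m a, Nat.xor_lt_two_pow i.isLt (svalX_lt m a)⟩ : Fin (2 ^ m))]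
  · simp [xString_apply]
  · intro b _ hb
    have : (b : ℕ) ≠ (i : ℕ) ^^^ svalX m a := fun h => hb (Fin.ext h)
    simp [xString_apply, this]
  · simp

theorem dirac_coset_zero {m : ℕ} {V : Set ℕ} (hV : ∀ x ∈ V, x < 2 ^ m) :
    dirac (cosetState m V) 0 = cosetState (m + 1) V := by
  funext i
  by_cases h : (i : ℕ) < 2 ^ m
  · simp [dirac, cosetState, h]
  · have : (i : ℕ) ∉ V := fun h' => h (hV _ h')
    simp [dirac, cosetState, h, this]

/-- The doubled set. -/
def dblX (V : Set ℕ) (t : ℕ) : Set ℕ := V ∪ (fun x => x ^^^ t) '' V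

theorem mem_dblX {V : Set ℕ} {t x : ℕ} : x ∈ dblX V t ↔ x ∈ V ∨ x ^^^ t ∈ V := by
  constructor
  · rintro (h | ⟨y, hy, rfl⟩)
    · exact Or.inl h
    · right; simpa [Nat.xor_assoc] using hy
  · rintro (h | h)
    · exact Or.inl h
    · exact Or.inr ⟨_, h, by simp [Nat.xor_assoc]⟩

theorem ncard_dblX {m s : ℕ} {V : Set ℕ} (hs : s < 2 ^ m) (hV : ∀ x ∈ V, x < 2 ^ m) :
    (dblX V (2 ^ m + s)).ncard = 2 * V.ncard := by
  have hf : V.Finite := (Set.finite_lt_nat (2 ^ m)).subset hV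
  rw [dblX, Set.ncard_union_eq _ hf (hf.image _), Set.ncard_image_of_injective]
  · ring
  · intro x y h
    exact Nat.xor_left_injective h
  · rw [Set.disjoint_left]
    rintro _ hx ⟨y, hy, rfl⟩
    have := hV _ hx
    simp only [hx_lh (hV y hy) hs] at this
    omega

theorem dirac_coset_X {m : ℕ} {V : Set ℕ} (hV : ∀ x ∈ V, x < 2 ^ m) (a : Fin m → Bool) :
    (Real.sqrt 2 : ℂ)⁻¹ • dirac (cosetState m V) ((xString m a).mulVec (cosetState m V)) =
      cosetState (m + 1) (dblX V (2 ^ m + svalX m a)) := by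
  have hs := svalX_lt m a
  funext ⟨i, hi⟩
  have hc : ((Real.sqrt (2 * V.ncard : ℝ) : ℝ) : ℂ) = Real.sqrt 2 * Real.sqrt V.ncard := by
    rw [Real.sqrt_mul (by norm_num)]; push_cast; rfl
  have hmem : (i ∈ dblX V (2 ^ m + svalX m a)) ↔
      i ∈ V ∨ i ^^^ (2 ^ m + svalX m a) ∈ V := mem_dblX
  rcases hx_split hi with h | ⟨i', h, rfl⟩
  · have : i ^^^ (2 ^ m + svalX m a) ∉ V := fun h' => by
      have := hV _ h'
      rw [hx_lh h hs] at this; omega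
    simp only [this, or_false] at hmem
    simp only [Pi.smul_apply, dirac, cosetState, h, hmem, ncard_dblX hs hV, dif_pos]
    split_ifs with g1 g2 g2
    · push_cast
      rw [hc, smul_eq_mul]; simp [mul_comm]
    · exact absurd (hmem.mpr g1) g2
    · exact absurd (hmem.mp g2) g1
    · simp
  · have : 2 ^ m + i' ∉ V := fun h' => by
      have := hV _ h'
      omega
    have h2 : ¬ (2 ^ m + i' < 2 ^ m) := by omega
    simp only [this, false_or, hx_hh h hs] at hmem
    simp only [Pi.smul_apply, dirac, h2, xString_mulVec, cosetState, hmem, ncard_dblX hs hV,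
      dif_neg, not_false_eq_true, Nat.add_sub_cancel_left]
    split_ifs with g1 g2 g2
    · push_cast
      rw [hc, smul_eq_mul]; simp [mul_comm]
    · exact absurd (hmem.mpr g1) g2
    · exact absurd (hmem.mp g2) g1
    · simp

/-- The tower construction with `X`-string labels produces exactly the coset states
of subgroups of `({0,1}^n, XOR)` (bitstrings encoded as naturals `< 2^n`). -/
theorem Xset_eq_subgroup_coset_states (n : ℕ) (hn : 1 ≤ n) :
    Xset n = {ψ : Fin (2 ^ n) → ℂ | ∃ V : Set ℕ,
      (∀ x ∈ V, x < 2 ^ n) ∧ 0 ∈ V ∧ (∀ a ∈ V, ∀ b ∈ V, a ^^^ b ∈ V) ∧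
      ψ = cosetState n V} := by
  induction n, hn using Nat.le_induction with
  | base =>
    ext ψ
    have e0 : (fun i => if (i : ℕ) = 0 then 1 else 0 : Fin (2 ^ 1) → ℂ) = cosetState 1 {0} := by
      funext i; simp [cosetState]
    have e1 : (fun _ => (Real.sqrt 2 : ℂ)⁻¹ : Fin (2 ^ 1) → ℂ) = cosetState 1 {0, 1} := by
      funext ⟨i, hi⟩
      have : i = 0 ∨ i = 1 := by omega
      simp [cosetState, this, Set.ncard_pair]
    rw [Xset, e0, e1]
    constructor
    · rintro (rfl | rfl)
      · exact ⟨{0}, by simp, by simp, by simp, rfl⟩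
      · exact ⟨{0, 1}, by simp, by simp, by simp, rfl⟩
    · rintro ⟨V, hV, h0, -, rfl⟩
      by_cases h1 : 1 ∈ V
      · right
        have : V = {0, 1} := by
          ext x
          constructor
          · intro hx; have := hV x hx
            have : x = 0 ∨ x = 1 := by omega
            simpa using this
          · rintro (rfl | rfl) <;> assumption
        rw [this]; rfl
      · left
        have : V = {0} := by
          ext x
          constructor
          · intro hx; have := hV x hx
            have : x ≠ 1 := fun h => h1 (h ▸ hx)
            show x = 0
            omega
          · rintro rfl; assumption
        rw [this]
  | succ n hn ih =>
    obtain ⟨k, rfl⟩ : ∃ k, n = k + 1 := ⟨n - 1, by omega⟩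
    rw [Xset, ih]
    have hlt : 2 ^ (k + 1) < 2 ^ ((k + 1) + 1) := Nat.pow_lt_pow_right (by norm_num) (by omega)
    ext ψ
    constructor
    · rintro (⟨_, ⟨V, hV, h0, hx, rfl⟩, rfl⟩ | ⟨_, ⟨V, hV, h0, hx, rfl⟩, a, rfl⟩)
      · exact ⟨V, fun x h => (hV x h).trans hlt, h0, hx, dirac_coset_zero hV⟩
      · refine ⟨_, ?_, ?_, ?_, dirac_coset_X hV a⟩
        · have hs := svalX_lt (k + 1) a
          rintro x (h | ⟨y, hy, rfl⟩)
          · exact (hV x h).trans hlt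
          · refine Nat.xor_lt_two_pow ((hV y hy).trans hlt) ?_
            rw [pow_succ]; omega
        · exact Or.inl h0
        · intro x hx' y hy'
          generalize 2 ^ (k + 1) + svalX (k + 1) a = t at *
          rw [mem_dblX] at *
          rcases hx' with h | h <;> rcases hy' with h' | h' <;> have h2 := hx _ h _ h'
          · exact Or.inl h2
          · right; rwa [Nat.xor_assoc]
          · right; rwa [Nat.xor_assoc, Nat.xor_comm y, ← Nat.xor_assoc]
          · left
            rwa [Nat.xor_comm y, ← Nat.xor_assoc, Nat.xor_assoc x, Nat.xor_self,
              Nat.xor_zero] at h2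
    · rintro ⟨V, hV, h0, hx, rfl⟩
      by_cases hl : ∀ x ∈ V, x < 2 ^ (k + 1)
      · exact Or.inl ⟨_, ⟨V, hl, h0, hx, rfl⟩, (dirac_coset_zero hl).symm⟩
      · right
        push Not at hl
        obtain ⟨t, ht, htl⟩ := hl
        rcases hx_split (hV t ht) with h | ⟨s, hs, rfl⟩
        · omega
        obtain ⟨a, ha⟩ := svalX_surj (k + 1) s hs
        refine ⟨_, ⟨{x ∈ V | x < 2 ^ (k + 1)}, fun x h => h.2, ⟨h0, by positivity⟩,
          fun x h y h' => ⟨hx _ h.1 _ h'.1, Nat.xor_lt_two_pow h.2 h'.2⟩, rfl⟩, a, ?_⟩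
        rw [dirac_coset_X (fun x h => h.2), ha]
        congr 1
        ext x
        rw [mem_dblX]
        constructor
        · intro h
          rcases hx_split (hV x h) with h' | ⟨y, hy, rfl⟩
          · exact Or.inl ⟨h, h'⟩
          · right
            refine ⟨hx _ h _ ht, ?_⟩
            rw [hx_hh hy hs]; exact Nat.xor_lt_two_pow hy hs
        · rintro (h | h)
          · exact h.1
          · have := hx _ h.1 _ ht
            rwa [Nat.xor_assoc, Nat.xor_self, Nat.xor_zero] at this

end
end
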